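/- Let π : G → Q be a surjective group homomorphism whose kernel A is abelian and finitely generated, where G is countable. Suppose that for every proper left-invariant metric on Q, every subgroup of Q has bounded packing in Q. Then for every proper left-invariant metric on G, every subgroup of G has bounded packing in G. -/

import Mathlib

/-!
Write `A = ker π`. Two `D`-close cosets of `H` in `G` have representatives `x, y` with `x⁻¹ y` in the
finite ball `F` of radius `D + 1`.

The metric on `G` induces a proper left-invariant quotient metric on `Q`
(`exists_quotient_metric`) for which `π` does not increase distances. Pairwise close cosets of `H`
therefore map to pairwise close cosets of `π(H)`, and bounded packing in `Q` bounds the number of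
images.

It remains to bound the number of pairwise close cosets inside one coset `g₀ A H`, that is, cosets
`g₀ a H` with `a ∈ A`. Finitely generated abelian groups are residually finite, so `A / (H ⊓ A)` is;
this yields (`sep_fin`) a subgroup `M ≤ A` of finite index in `A`, normal in `G`, such that every
element of `F` lying in `H M` already lies in `H`. If `a, b` agree modulo `M` and `g₀ a H`, `g₀ b H`
are close, then some `f ∈ F` lies in `H a⁻¹ b H ⊆ H M`, so `f ∈ H`, and the two cosets
coincide. Hence there are at most `[A : M]` such cosets.
-/

open Pointwise

/-- A proper left-invariant metric on a group `G`, given as a distance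
function `d : G → G → ℝ`. -/
structure IsProperLeftInvMetric (G : Type*) [Group G] (d : G → G → ℝ) : Prop where
  self : ∀ x, d x x = 0
  eq_of_dist_eq_zero : ∀ x y, d x y = 0 → x = y
  symm : ∀ x y, d x y = d y x
  triangle : ∀ x y z, d x z ≤ d x y + d y z
  left_invariant : ∀ g x y, d (g * x) (g * y) = d x y
  proper : ∀ r : ℝ, 0 < r → {g : G | d 1 g ≤ r}.Finite

/-- The distance between two subsets of `G`: the infimum of distances between
their points. -/
noncomputable def cosetDist {G : Type*} [Group G] (d : G → G → ℝ) (A B : Set G) : ℝ :=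
  sInf {r : ℝ | ∃ x ∈ A, ∃ y ∈ B, d x y = r}

/-- A subgroup `H` has bounded packing in `G` with respect to `d` if for every
`D > 0` there is `n` such that any collection of (pairwise distinct) left cosets
of `H`, any two of which are at distance at most `D`, has at most `n` elements. -/
def HasBoundedPacking {G : Type*} [Group G] (d : G → G → ℝ) (H : Subgroup G) : Prop :=
  ∀ D : ℝ, 0 < D → ∃ n : ℕ, ∀ S : Set (Set G),
    (∀ A ∈ S, ∃ g : G, A = g • (H : Set G)) →
    (∀ A ∈ S, ∀ B ∈ S, cosetDist d A B ≤ D) →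
    ∀ T : Finset (Set G), ↑T ⊆ S → T.card ≤ n

/-! ### Residual finiteness of finitely generated abelian groups -/

/-- Krull's intersection theorem over `ℤ`: if a maximal ideal `I` contains the annihilator of
`x ≠ 0`, then `x` lies outside some `I ^ k • M`. -/
lemma res_aux {M : Type*} [AddCommGroup M] [Module.Finite ℤ M] (x : M) (hx : x ≠ 0) :
    ∃ m : ℕ, 0 < m ∧ ∀ y : M, x ≠ m • y := by
  have hne : Ideal.torsionOf ℤ M x ≠ ⊤ := by
    rwa [Ne, Ideal.torsionOf_eq_top_iff]
  obtain ⟨I, hI, hle⟩ := Ideal.exists_le_maximal _ hne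
  have hx' : x ∉ (⨅ i : ℕ, I ^ i • ⊤ : Submodule ℤ M) := by
    rw [Ideal.mem_iInf_smul_pow_eq_bot_iff]
    rintro ⟨r, hr⟩
    have h1 : (r : ℤ) - 1 ∈ I := hle (by
      rw [Ideal.mem_torsionOf_iff, sub_smul, one_smul, hr, sub_self])
    exact hI.ne_top ((Ideal.eq_top_iff_one I).2 (by
      have := I.sub_mem r.2 h1
      simpa using this))
  rw [Submodule.mem_iInf] at hx'
  push Not at hx'
  obtain ⟨k, hk⟩ := hx'
  have hbot : I ≠ ⊥ := Ring.ne_bot_of_isMaximal_of_not_isField hI Int.not_isField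
  obtain ⟨p, hp, hp0⟩ := Submodule.exists_mem_ne_zero_of_ne_bot hbot
  refine ⟨(p ^ k).natAbs, Int.natAbs_pos.2 (pow_ne_zero _ hp0), fun y hy => hk ?_⟩
  rw [hy, ← natCast_zsmul]
  refine Submodule.smul_mem_smul ?_ trivial
  have := Ideal.pow_mem_pow hp k
  rcases Int.natAbs_eq (p ^ k) with h | h
  · rwa [← h]
  · rw [h] at this
    simpa using this

/-- Applied to the quotient `A / B`: subgroups of a finitely generated abelian group are separated
from outside points by the subgroups of `m`-th powers. -/
lemma res_mul {A : Type*} [CommGroup A] [Group.FG A] (B : Subgroup A) (a : A) (ha : a ∉ B) :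
    ∃ m : ℕ, 0 < m ∧ ∀ b ∈ B, ∀ x : A, a ≠ b * x ^ m := by
  have : Module.Finite ℤ (Additive (A ⧸ B)) :=
    Module.Finite.iff_addGroup_fg.2 inferInstance
  obtain ⟨m, hm, h⟩ := res_aux (Additive.ofMul (a : A ⧸ B)) (by
    simpa [QuotientGroup.eq_one_iff] using ha)
  refine ⟨m, hm, fun b hb x hx => h (Additive.ofMul (x : A ⧸ B)) ?_⟩
  rw [hx, ← ofMul_pow, QuotientGroup.mk_mul, (QuotientGroup.eq_one_iff b).2 hb, one_mul]
  rfl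

lemma fin_pow {A : Type*} [CommGroup A] [Group.FG A] (m : ℕ) (hm : 0 < m) :
    (powMonoidHom m : A →* A).range.FiniteIndex := by
  have : Finite (A ⧸ (powMonoidHom m : A →* A).range) := by
    refine CommGroup.finite_of_fg_isMulTorsion _ fun q => ?_
    induction q using QuotientGroup.induction_on with
    | H x =>
      rw [isOfFinOrder_iff_pow_eq_one]
      exact ⟨m, hm, (QuotientGroup.eq_one_iff (x ^ m)).2 ⟨x, rfl⟩⟩
  exact Subgroup.finiteIndex_of_finite_quotient

/-! ### Separation by a finite-index subgroup of the normal subgroup -/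

/-- If `f ∉ H ⊔ A`, take `M = A`. Otherwise `M` is the subgroup of `m`-th powers of elements of `A`,
which is characteristic in `A` and hence normal in `G`; if `f = h * a` with `h ∈ H`, `a ∈ A`, then
`f ∈ H ⊔ M` would put `a` in `(H ⊓ A) ⊔ M`. -/
lemma sep_one {G : Type*} [Group G] (A : Subgroup G) [A.Normal]
    (hab : ∀ x y : A, x * y = y * x) (hfg : A.FG) (H : Subgroup G) (f : G) (hf : f ∉ H) :
    ∃ M : Subgroup G, M.Normal ∧ M ≤ A ∧ M.relIndex A ≠ 0 ∧ f ∉ H ⊔ M := by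
  by_cases hfA : f ∈ H ⊔ A
  swap
  · exact ⟨A, inferInstance, le_rfl, by simp, hfA⟩
  rw [Subgroup.mem_sup_of_normal_right] at hfA
  obtain ⟨h, hh, a, ha, rfl⟩ := hfA
  let _ : CommGroup A := { (inferInstance : Group A) with mul_comm := hab }
  have : Group.FG A := (Group.fg_iff_subgroup_fg A).2 hfg
  have haH : a ∉ H := fun h' => hf (mul_mem hh h')
  obtain ⟨m, hm, hsep⟩ := res_mul (H.subgroupOf A) ⟨a, ha⟩ (by
    simpa [Subgroup.mem_subgroupOf] using haH)
  have hfin := fin_pow (A := A) m hm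
  have hN : ((powMonoidHom m : A →* A).range.map A.subtype).Normal := by
    refine ⟨?_⟩
    rintro _ ⟨_, ⟨x, rfl⟩, rfl⟩ g
    refine ⟨_, ⟨⟨g * x * g⁻¹, ‹A.Normal›.conj_mem _ x.2 g⟩, rfl⟩, ?_⟩
    simp
  refine ⟨(powMonoidHom m : A →* A).range.map A.subtype, hN, Subgroup.map_subtype_le _, ?_, ?_⟩
  · rw [Subgroup.relIndex, Subgroup.subgroupOf,
      Subgroup.comap_map_eq_self_of_injective A.subtype_injective]
    exact hfin.index_ne_zero
  · rw [Subgroup.mem_sup_of_normal_right]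
    rintro ⟨k, hk, _, ⟨_, ⟨x, rfl⟩, rfl⟩, he⟩
    have he' : h⁻¹ * k = a * ((x : G) ^ m)⁻¹ := by
      rw [eq_mul_inv_iff_mul_eq, mul_assoc, inv_mul_eq_iff_eq_mul]
      simpa using he
    have hA : h⁻¹ * k ∈ A := by
      rw [he']; exact mul_mem ha (inv_mem (pow_mem x.2 m))
    refine hsep ⟨h⁻¹ * k, hA⟩ (Subgroup.mem_subgroupOf.2 (mul_mem (inv_mem hh) hk)) x ?_
    apply Subtype.ext
    simp [he']

lemma sep_fin {G : Type*} [Group G] (A : Subgroup G) [A.Normal]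
    (hab : ∀ x y : A, x * y = y * x) (hfg : A.FG) (H : Subgroup G) (F : Set G) (hF : F.Finite) :
    ∃ M : Subgroup G, M.Normal ∧ M ≤ A ∧ M.relIndex A ≠ 0 ∧ ∀ f ∈ F, f ∈ H ⊔ M → f ∈ H := by
  induction F, hF using Set.Finite.induction_on with
  | empty => exact ⟨A, inferInstance, le_rfl, by simp, by simp⟩
  | @insert f F _ _ ih =>
    obtain ⟨M, hM, hMA, hi, hsep⟩ := ih
    by_cases hf : f ∈ H
    · refine ⟨M, hM, hMA, hi, ?_⟩
      rintro g (rfl | hg) hg'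
      exacts [hf, hsep g hg hg']
    obtain ⟨M', hM', -, hi', hsep'⟩ := sep_one A hab hfg H f hf
    refine ⟨M ⊓ M', inferInstance, inf_le_left.trans hMA, Subgroup.relIndex_inf_ne_zero hi hi', ?_⟩
    rintro g (rfl | hg) hg'
    · exact (hsep' (sup_le_sup_left inf_le_right H hg')).elim
    · exact hsep g hg (sup_le_sup_left inf_le_left H hg')

/-! ### Distances between cosets and the quotient metric -/

lemma dist_nonneg' {G : Type*} [Group G] {d : G → G → ℝ} (hd : IsProperLeftInvMetric G d)
    (x y : G) : 0 ≤ d x y := by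
  have h := hd.triangle x y x
  rw [hd.self, hd.symm y x] at h
  linarith

lemma cosetDist_le {G : Type*} [Group G] {d : G → G → ℝ} (hd : IsProperLeftInvMetric G d)
    {A B : Set G} {x y : G} (hx : x ∈ A) (hy : y ∈ B) : cosetDist d A B ≤ d x y := by
  refine csInf_le ⟨0, ?_⟩ ⟨x, hx, y, hy, rfl⟩
  rintro _ ⟨x, -, y, -, rfl⟩
  exact dist_nonneg' hd x y

lemma exists_dist_lt {G : Type*} [Group G] {d : G → G → ℝ}
    {A B : Set G} (hA : A.Nonempty) (hB : B.Nonempty) {D : ℝ} (h : cosetDist d A B < D) :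
    ∃ x ∈ A, ∃ y ∈ B, d x y < D := by
  obtain ⟨x, hx⟩ := hA
  obtain ⟨y, hy⟩ := hB
  obtain ⟨_, ⟨x, hx, y, hy, rfl⟩, hlt⟩ := exists_lt_of_csInf_lt (⟨d x y, x, hx, y, hy, rfl⟩ :
    {r : ℝ | ∃ x ∈ A, ∃ y ∈ B, d x y = r}.Nonempty) h
  exact ⟨x, hx, y, hy, hlt⟩

/-- The quotient metric: `dQ p q` is the minimum of `d 1` over the fibre of `p⁻¹ * q`. Properness of
`d` makes it an attained minimum, which gives definiteness and properness of `dQ`. -/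
lemma exists_quotient_metric {G Q : Type*} [Group G] [Group Q] (π : G →* Q)
    (hπ : Function.Surjective π) {d : G → G → ℝ} (hd : IsProperLeftInvMetric G d) :
    ∃ dQ : Q → Q → ℝ, IsProperLeftInvMetric Q dQ ∧ ∀ x y, dQ (π x) (π y) ≤ d x y := by
  have key : ∀ q : Q, ∃ x, π x = q ∧ ∀ y, π y = q → d 1 x ≤ d 1 y := by
    intro q
    obtain ⟨x₀, hx₀⟩ := hπ q
    -- Only the finite ball of radius `max 1 (d 1 x₀)` matters for the minimum.
    obtain ⟨x, hx, hmin⟩ := Set.exists_min_image ({g | d 1 g ≤ max 1 (d 1 x₀)} ∩ {g | π g = q})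
      (d 1) ((hd.proper _ (by positivity)).inter_of_left _) ⟨x₀, le_max_right 1 (d 1 x₀), hx₀⟩
    refine ⟨x, hx.2, fun y hy => ?_⟩
    rcases le_total (d 1 y) (max 1 (d 1 x₀)) with h | h
    · exact hmin y ⟨h, hy⟩
    · exact hx.1.trans h
  choose s hs hmin using key
  have hmul : ∀ x y, d 1 (x * y) ≤ d 1 x + d 1 y := fun x y => by
    have := hd.triangle 1 x (x * y)
    have h2 := hd.left_invariant x 1 y
    rw [mul_one] at h2
    rwa [h2] at this
  have hinv : ∀ x, d 1 x⁻¹ = d 1 x := fun x => by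
    rw [← hd.left_invariant x 1 x⁻¹, mul_one, mul_inv_cancel, hd.symm]
  refine ⟨fun p q => d 1 (s (p⁻¹ * q)), ⟨fun x => ?_, fun x y h => ?_, fun x y => ?_,
    fun x y z => ?_, fun g x y => ?_, fun r hr => ?_⟩, fun x y => ?_⟩
  · refine le_antisymm ?_ (dist_nonneg' hd _ _)
    rw [← hd.self 1]
    exact hmin _ 1 (by simp)
  · have h1 := hd.eq_of_dist_eq_zero _ _ h
    have h2 := hs (x⁻¹ * y)
    rw [← h1, map_one, eq_comm, inv_mul_eq_one] at h2
    exact h2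
  · have aux : ∀ x y : Q, d 1 (s (x⁻¹ * y)) ≤ d 1 (s (y⁻¹ * x)) := fun x y => by
      rw [← hinv (s (y⁻¹ * x))]
      exact hmin _ _ (by simp [hs])
    exact le_antisymm (aux x y) (aux y x)
  · exact (hmin _ (s (x⁻¹ * y) * s (y⁻¹ * z)) (by simp [hs, mul_assoc])).trans (hmul _ _)
  · simp [mul_assoc]
  · refine ((hd.proper r hr).image π).subset fun q hq => ⟨s q, ?_, hs q⟩
    simpa using hq
  · refine (hmin _ (x⁻¹ * y) (by simp)).trans_eq ?_
    rw [← hd.left_invariant x, mul_one, mul_inv_cancel_left]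

/-! ### Counting cosets -/

/-- If `G` is countable with finitely generated abelian kernel `A = ker π` for a
surjection `π : G → Q`, and every subgroup of `Q` has bounded packing with respect
to every proper left-invariant metric on `Q`, then every subgroup of `G` has
bounded packing with respect to every proper left-invariant metric on `G`. -/
theorem abelian_fg_by_boundedPacking {G Q : Type*} [Group G] [Group Q] [Countable G]
    (π : G →* Q) (hπ : Function.Surjective π)
    (hab : ∀ x y : π.ker, x * y = y * x) (hfg : π.ker.FG)
    (hQ : ∀ dQ : Q → Q → ℝ, IsProperLeftInvMetric Q dQ →
      ∀ Q₁ : Subgroup Q, HasBoundedPacking dQ Q₁) :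
    ∀ dG : G → G → ℝ, IsProperLeftInvMetric G dG →
      ∀ H : Subgroup G, HasBoundedPacking dG H := by
  classical
  intro d hd H D hD
  obtain ⟨dQ, hdQ, hle⟩ := exists_quotient_metric π hπ hd
  obtain ⟨N, hN⟩ := hQ dQ hdQ (H.map π) (D + 1) (by positivity)
  obtain ⟨M, hM, hMA, hi, hsep⟩ := sep_fin π.ker hab hfg H _ (hd.proper (D + 1) (by positivity))
  refine ⟨M.relIndex π.ker * N, fun S hS hSD T hT => ?_⟩
  have hclose : ∀ X ∈ T, ∀ Y ∈ T, ∃ x ∈ X, ∃ y ∈ Y, d x y < D + 1 := by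
    have hne : ∀ X ∈ T, X.Nonempty := fun X hX => by
      obtain ⟨g, rfl⟩ := hS X (hT hX)
      exact ⟨g, 1, H.one_mem, by simp⟩
    intro X hX Y hY
    exact exists_dist_lt (hne X hX) (hne Y hY)
      ((hSD X (hT hX) Y (hT hY)).trans_lt (by linarith))
  -- The images in `Q` are pairwise close cosets of `π(H)`, so there are at most `N` of them.
  have himage : (T.image (π '' ·)).card ≤ N := by
    refine hN (T.image (π '' ·) : Finset (Set Q)) ?_ ?_ _ subset_rfl
    · intro A hA
      obtain ⟨X, hX, rfl⟩ := Finset.mem_image.1 hA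
      obtain ⟨g, rfl⟩ := hS X (hT hX)
      exact ⟨π g, by simp [Set.image_smul_distrib]⟩
    · intro A hA B hB
      obtain ⟨X, hX, rfl⟩ := Finset.mem_image.1 hA
      obtain ⟨Y, hY, rfl⟩ := Finset.mem_image.1 hB
      obtain ⟨x, hx, y, hy, hxy⟩ := hclose X hX Y hY
      exact (cosetDist_le hdQ (Set.mem_image_of_mem π hx) (Set.mem_image_of_mem π hy)).trans
        ((hle x y).trans hxy.le)
  refine (Finset.card_le_mul_card_image T (M.relIndex π.ker) fun c hc => ?_).trans
    (Nat.mul_le_mul_left _ himage)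
  obtain ⟨X₀, hX₀, rfl⟩ := Finset.mem_image.1 hc
  obtain ⟨g₀, hg₀⟩ := hS X₀ (hT hX₀)
  have hg₀' : g₀ ∈ X₀ := by rw [hg₀]; exact ⟨1, H.one_mem, by simp⟩
  have hrep : ∀ X : {X // X ∈ T.filter (π '' · = π '' X₀)}, ∃ x ∈ X.1, π x = π g₀ := by
    rintro ⟨X, hX⟩
    have : π g₀ ∈ π '' X := by
      rw [(Finset.mem_filter.1 hX).2]; exact Set.mem_image_of_mem π hg₀'
    exact this
  -- The cosets with the same image as `g₀ H` have the form `g₀ a H` with `a ∈ ker π`; it remains to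
  -- see that `a` modulo `M` determines the coset.
  choose x hxX hxπ using hrep
  have hcoset : ∀ X, X.1 = x X • (H : Set G) := fun X => by
    obtain ⟨g, hg⟩ := hS X.1 (hT (Finset.mem_filter.1 X.2).1)
    have := hxX X
    rw [hg] at this ⊢
    rw [leftCoset_eq_iff]
    exact Set.mem_smul_set_iff_inv_smul_mem.1 this
  have hfin : Finite (π.ker ⧸ M.subgroupOf π.ker) :=
    have : (M.subgroupOf π.ker).FiniteIndex := ⟨hi⟩
    inferInstance
  let φ : {X // X ∈ T.filter (π '' · = π '' X₀)} → π.ker ⧸ M.subgroupOf π.ker := fun X =>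
    ((⟨g₀⁻¹ * x X, by simp [MonoidHom.mem_ker, hxπ]⟩ : π.ker) : π.ker ⧸ M.subgroupOf π.ker)
  have hφ : Function.Injective φ := by
    intro X Y h
    have hM' : (x X)⁻¹ * x Y ∈ M := by
      have := QuotientGroup.eq.1 h
      simpa [Subgroup.mem_subgroupOf, mul_assoc] using this
    obtain ⟨u, hu, v, hv, huv⟩ := hclose X.1 (Finset.mem_filter.1 X.2).1 Y.1
      (Finset.mem_filter.1 Y.2).1
    rw [hcoset] at hu hv
    obtain ⟨k, hk, rfl⟩ := hu
    obtain ⟨l, hl, rfl⟩ := hv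
    have hf : (k⁻¹ * ((x X)⁻¹ * x Y)) * l ∈ H := by
      refine hsep _ ?_ (mul_mem (mul_mem (inv_mem (Subgroup.mem_sup_left hk))
        (Subgroup.mem_sup_right hM')) (Subgroup.mem_sup_left hl))
      have := hd.left_invariant (x X * k) 1 (k⁻¹ * ((x X)⁻¹ * x Y) * l)
      change d 1 _ ≤ D + 1
      rw [← this]
      simpa [mul_assoc] using huv.le
    apply Subtype.ext
    rw [hcoset X, hcoset Y, leftCoset_eq_iff]
    rwa [H.mul_mem_cancel_right hl, H.mul_mem_cancel_left (inv_mem hk)] at hf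
  have hcard := Nat.card_le_card_of_injective φ hφ
  rwa [Nat.card_eq_finsetCard] at hcard
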